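/- (Entropic Kakeya bound, k = 1) For any random variable R supported on F_q^n, there exists a surjective linear map φ: F_q^n → F_q^{n−1} such that H_∞^q(φ(R)) ≥ ((n−1)/n)·H_∞^q(R) − log_q(2 − q^{-1}). -/

import Mathlib

/-- The `q`-ary min-entropy of a random variable (probability mass function) `p`:
`H_∞^q(p) = −log_q (max_w Pr[p = w])`. -/
noncomputable def minEntropy {α : Type*} (q : ℕ) (p : PMF α) : ℝ :=
  - Real.logb q (⨆ w : α, (p w).toReal)

/-!
The proof is the method of multiplicities. For large `N`, counting coefficients gives a nonzero
polynomial `P` of degree at most about `N (∑ x, f x ^ n) ^ (1 / n)` which vanishes to order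
`⌈N f x⌉` at every point `x`. The coefficients of `P (X + a + T b)` at the monomials in `X` are
polynomials in `T`; along each line they inherit the zeros of `P`, and their top coefficients in
`T` are the Hasse derivatives at `b` of the top homogeneous component `H` of `P`. By the
Schwartz–Zippel lemma with multiplicities, some Hasse derivative of `H` of order at most
`deg H / q` is nonzero at some `b`, and counting zeros bounds the sum of `f` over every line in
direction `b`. Taking for `f` the probability mass function and for `φ` a projection with kernel
spanned by `b` gives the theorem, since the masses of `φ(R)` are the sums of `f` over those lines.
-/

open MvPolynomial

section Translate

variable {σ R A B : Type*} [CommSemiring R] [CommSemiring A] [Algebra R A] [CommSemiring B]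
  [Algebra R B]

/-- The translate `P(X + a)` of a polynomial `P` over `R` by a point `a` with coordinates in an
`R`-algebra. Its coefficient at `i` is the value at `a` of the `i`-th Hasse derivative of `P`. -/
noncomputable def mvTaylor (a : σ → A) : MvPolynomial σ R →ₐ[R] MvPolynomial σ A :=
  aeval fun k => X k + C (a k)

@[simp]
lemma mvTaylor_X (a : σ → A) (k : σ) : mvTaylor (R := R) a (X k) = X k + C (a k) :=
  aeval_X _ _

lemma mvTaylor_zero (P : MvPolynomial σ R) :
    mvTaylor (0 : σ → A) P = map (algebraMap R A) P := by
  have h : mvTaylor (0 : σ → A) = mapAlgHom (σ := σ) (Algebra.ofId R A) := by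
    ext1 k
    simp
  exact DFunLike.congr_fun h P

lemma mvTaylor_zero_self (P : MvPolynomial σ R) : mvTaylor (0 : σ → R) P = P := by
  rw [mvTaylor_zero, Algebra.algebraMap_self, MvPolynomial.map_id]

lemma map_mvTaylor (f : A →ₐ[R] B) (a : σ → A) (P : MvPolynomial σ R) :
    map (f : A →+* B) (mvTaylor a P) = mvTaylor (f ∘ a) P := by
  have h : (mapAlgHom f).comp (mvTaylor a) = mvTaylor (R := R) (f ∘ a) := by
    ext1 k
    simp
  exact DFunLike.congr_fun h P

lemma mvTaylor_mvTaylor (a : σ → A) (c : σ → R) (P : MvPolynomial σ R) :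
    mvTaylor a (mvTaylor c P) = mvTaylor (fun k => algebraMap R A (c k) + a k) P := by
  have h : (mvTaylor a).comp (mvTaylor c) =
      mvTaylor (R := R) (fun k => algebraMap R A (c k) + a k) := by
    ext1 k
    have hC : mvTaylor a (C (c k)) = C (algebraMap R A (c k)) := algHom_C _ _
    rw [AlgHom.comp_apply, mvTaylor_X, mvTaylor_X, map_add, mvTaylor_X, hC, C_add]
    ring
  exact DFunLike.congr_fun h P

lemma coeff_aeval_C_mul_X (s : A) (P : MvPolynomial σ A) (i : σ →₀ ℕ) :
    coeff i (aeval (fun k => C s * X k : σ → MvPolynomial σ A) P) = s ^ i.degree * coeff i P := by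
  classical
  induction P using MvPolynomial.induction_on' with
  | add P Q hP hQ => simp only [map_add, coeff_add, hP, hQ, mul_add]
  | monomial u c =>
    have h : aeval (fun k => C s * X k : σ → MvPolynomial σ A) (monomial u c) =
        monomial u (s ^ u.degree * c) := by
      simp only [aeval_monomial, algebraMap_eq, Finsupp.prod, mul_pow, Finset.prod_mul_distrib,
        Finset.prod_pow_eq_pow_sum]
      rw [monomial_eq, Finsupp.prod, Finsupp.degree_apply, C_mul, C_pow]
      ring
    rw [h, coeff_monomial, coeff_monomial]
    split_ifs with hu
    · rw [hu]
    · rw [mul_zero]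

lemma aeval_mul_of_isHomogeneous {e : ℕ} {P : MvPolynomial σ R} (hP : P.IsHomogeneous e)
    (s : A) (v : σ → A) : aeval (fun k => s * v k) P = s ^ e * aeval v P := by
  simp only [aeval_def, eval₂_eq, Finset.mul_sum]
  refine Finset.sum_congr rfl fun u hu => ?_
  rw [hP.degree_eq_sum_deg_support hu, ← Finset.prod_pow_eq_pow_sum]
  simp only [mul_pow, Finset.prod_mul_distrib]
  ring

/-- Scaling both `X` and `b` by `s` scales a form of degree `e` by `s ^ e`. The factor
`s ^ i.degree` stays on the left because `s` need not be invertible. -/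
lemma pow_degree_mul_coeff_mvTaylor {e : ℕ} {P : MvPolynomial σ R} (hP : P.IsHomogeneous e)
    (s : A) (b : σ → R) (i : σ →₀ ℕ) :
    s ^ i.degree * coeff i (mvTaylor (fun k => s * algebraMap R A (b k)) P) =
      s ^ e * algebraMap R A (coeff i (mvTaylor b P)) := by
  have hcomp : ((aeval fun k => C s * X k : MvPolynomial σ A →ₐ[A] _).restrictScalars R).comp
      (mvTaylor fun k => s * algebraMap R A (b k)) =
      aeval (R := R) fun k => C s * (X k + C (algebraMap R A (b k))) := by
    ext1 k
    simp [mul_add, algebraMap_eq]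
  have hscale : aeval (fun k => C s * X k : σ → MvPolynomial σ A)
        (mvTaylor (fun k => s * algebraMap R A (b k)) P) =
      aeval (fun k => C s * (X k + C (algebraMap R A (b k)))) P := DFunLike.congr_fun hcomp P
  rw [← coeff_aeval_C_mul_X, hscale, aeval_mul_of_isHomogeneous hP, ← C_pow, coeff_C_mul,
    ← coeff_map]
  congr 2
  exact (map_mvTaylor (Algebra.ofId R A) b P).symm

end Translate

section Line

variable {σ R : Type*} [CommSemiring R]

/-- The generic point `a + T b` of the line through `a` in direction `b`, with coordinates in
`R[T]`. -/
noncomputable def linePoint (a b : σ → R) : σ → Polynomial R :=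
  fun k => Polynomial.C (a k) + Polynomial.X * Polynomial.C (b k)

lemma taylorAlgHom_comp_linePoint (a b : σ → R) (t : R) :
    Polynomial.taylorAlgHom t ∘ linePoint a b = linePoint (a + t • b) b := by
  ext1 k
  simp only [linePoint, Function.comp_apply, Polynomial.taylorAlgHom_apply, map_add,
    Polynomial.taylor_C, Polynomial.taylor_mul, Polynomial.taylor_X, Pi.add_apply, Pi.smul_apply,
    smul_eq_mul, Polynomial.C_mul]
  ring

lemma taylor_coeff_mvTaylor (t : R) (v : σ → Polynomial R) (P : MvPolynomial σ R) (i : σ →₀ ℕ) :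
    Polynomial.taylor t (coeff i (mvTaylor v P)) =
      coeff i (mvTaylor (Polynomial.taylorAlgHom t ∘ v) P) := by
  rw [← map_mvTaylor, coeff_map]
  rfl

lemma mvTaylor_linePoint_zero_mvTaylor (a b : σ → R) (P : MvPolynomial σ R) :
    mvTaylor (linePoint 0 b) (mvTaylor a P) = mvTaylor (linePoint a b) P := by
  have h : (fun k => algebraMap R (Polynomial R) (a k) + linePoint 0 b k) = linePoint a b := by
    ext1 k
    simp [linePoint]
  rw [mvTaylor_mvTaylor, h]

lemma X_pow_degree_mul_coeff_mvTaylor_linePoint_zero (b : σ → R) (P : MvPolynomial σ R)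
    (i : σ →₀ ℕ) :
    Polynomial.X ^ i.degree * coeff i (mvTaylor (linePoint 0 b) P) =
      ∑ e ∈ Finset.range (P.totalDegree + 1),
        Polynomial.X ^ e * Polynomial.C (coeff i (mvTaylor b (homogeneousComponent e P))) := by
  have hb : linePoint 0 b = fun k => Polynomial.X * algebraMap R (Polynomial R) (b k) := by
    ext1 k
    simp [linePoint]
  conv_lhs => rw [← sum_homogeneousComponent P]
  rw [map_sum, coeff_sum, Finset.mul_sum]
  simp only [hb]
  refine Finset.sum_congr rfl fun e _ => ?_
  rw [pow_degree_mul_coeff_mvTaylor (homogeneousComponent_isHomogeneous e P) Polynomial.X b i]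
  rfl

lemma coeff_coeff_mvTaylor_linePoint (a b : σ → R) (P : MvPolynomial σ R) (i : σ →₀ ℕ) (k : ℕ) :
    (coeff i (mvTaylor (linePoint a b) P)).coeff k =
      coeff i (mvTaylor b (homogeneousComponent (k + i.degree) (mvTaylor a P))) := by
  rw [← mvTaylor_linePoint_zero_mvTaylor, ← Polynomial.coeff_X_pow_mul _ i.degree,
    X_pow_degree_mul_coeff_mvTaylor_linePoint_zero, Polynomial.finsetSum_coeff]
  simp only [Polynomial.coeff_mul_C, Polynomial.coeff_X_pow, ite_mul, one_mul, zero_mul]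
  rw [Finset.sum_ite_eq, ite_eq_left_iff, Finset.mem_range]
  intro h
  rw [homogeneousComponent_eq_zero _ _ (by omega), map_zero, coeff_zero]

lemma coeff_mvTaylor_of_totalDegree_le (b : σ → R) {P : MvPolynomial σ R} {i : σ →₀ ℕ}
    (hi : P.totalDegree ≤ i.degree) : coeff i (mvTaylor b P) = coeff i P := by
  -- `coeff i (P (X + T b))` is constant in `T`, and `T = 0`, `T = 1` give the two sides.
  set g := coeff i (mvTaylor (linePoint 0 b) P) with hg
  have hconst : g.natDegree = 0 := by
    rw [Polynomial.natDegree_eq_zero_iff_degree_le_zero, Polynomial.degree_le_iff_coeff_zero]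
    intro k hk
    have hk' : 0 < k := by exact_mod_cast hk
    rw [hg, coeff_coeff_mvTaylor_linePoint, mvTaylor_zero_self,
      homogeneousComponent_eq_zero _ _ (by omega), map_zero, coeff_zero]
  have heval (t : R) : g.eval t = coeff i (mvTaylor (t • b) P) := by
    have hpt : (Polynomial.aeval t : Polynomial R →ₐ[R] R) ∘ linePoint 0 b = t • b := by
      ext1 k
      simp only [linePoint, Function.comp_apply, Pi.zero_apply, Pi.smul_apply, map_zero, zero_add,
        map_mul, Polynomial.aeval_X, Polynomial.aeval_C, Algebra.algebraMap_self, RingHom.id_apply,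
        smul_eq_mul]
    rw [hg, ← hpt, ← map_mvTaylor, coeff_map, RingHom.coe_coe,
      Polynomial.coe_aeval_eq_eval]
  calc coeff i (mvTaylor b P) = g.eval 1 := by rw [heval, one_smul]
    _ = g.eval 0 := by rw [Polynomial.eq_C_of_natDegree_eq_zero hconst]; simp
    _ = coeff i P := by rw [heval, zero_smul, mvTaylor_zero_self]

lemma totalDegree_mvTaylor_le (b : σ → R) (P : MvPolynomial σ R) :
    (mvTaylor b P).totalDegree ≤ P.totalDegree := by
  refine Finset.sup_le fun u hu => ?_
  by_contra! hlt
  rw [mem_support_iff, coeff_mvTaylor_of_totalDegree_le b hlt.le] at hu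
  exact hu (coeff_eq_zero_of_totalDegree_lt hlt)

lemma homogeneousComponent_totalDegree_mvTaylor (b : σ → R) (P : MvPolynomial σ R) :
    homogeneousComponent P.totalDegree (mvTaylor b P) = homogeneousComponent P.totalDegree P := by
  ext i
  simp only [coeff_homogeneousComponent]
  split_ifs with hi
  · exact coeff_mvTaylor_of_totalDegree_le b hi.ge
  · rfl

lemma natDegree_coeff_mvTaylor_linePoint_le (a b : σ → R) (P : MvPolynomial σ R) (i : σ →₀ ℕ) :
    (coeff i (mvTaylor (linePoint a b) P)).natDegree ≤ P.totalDegree - i.degree := by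
  rw [Polynomial.natDegree_le_iff_coeff_eq_zero]
  intro k hk
  have hdeg := totalDegree_mvTaylor_le a P
  rw [coeff_coeff_mvTaylor_linePoint, homogeneousComponent_eq_zero _ _ (by omega), map_zero,
    coeff_zero]

/-- `P` vanishes at `a` to order at least `m`: the expansion of `P` around `a` has no monomial of
degree less than `m`. -/
def VanishesToOrder (P : MvPolynomial σ R) (a : σ → R) (m : ℕ) : Prop :=
  mvTaylor a P ∈ idealOfVars σ R ^ m

lemma vanishesToOrder_iff {P : MvPolynomial σ R} {a : σ → R} {m : ℕ} :
    VanishesToOrder P a m ↔ ∀ i : σ →₀ ℕ, i.degree < m → coeff i (mvTaylor a P) = 0 :=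
  mem_pow_idealOfVars_iff' m _

lemma VanishesToOrder.sub_degree_le_rootMultiplicity {σ R : Type*} [CommRing R]
    {P : MvPolynomial σ R} {a b : σ → R} {t : R} {m : ℕ} (h : VanishesToOrder P (a + t • b) m)
    {i : σ →₀ ℕ} (hi : coeff i (mvTaylor (linePoint a b) P) ≠ 0) :
    m - i.degree ≤ (coeff i (mvTaylor (linePoint a b) P)).rootMultiplicity t := by
  rw [Polynomial.le_rootMultiplicity_iff hi, Polynomial.X_sub_C_pow_dvd_iff,
    ← Polynomial.taylor_apply, taylor_coeff_mvTaylor, taylorAlgHom_comp_linePoint,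
    Polynomial.X_pow_dvd_iff]
  intro k hk
  have hcomp : homogeneousComponent (k + i.degree) (mvTaylor (a + t • b) P) = 0 :=
    homogeneousComponent_eq_zero' _ _ fun j hj hjk =>
      mem_support_iff.1 hj (vanishesToOrder_iff.1 h j (by omega))
  rw [coeff_coeff_mvTaylor_linePoint, hcomp, map_zero, coeff_zero]

end Line

section RootCount

variable {R : Type*} [CommRing R] [IsDomain R]

lemma sum_rootMultiplicity_le_natDegree (S : Finset R) (g : Polynomial R) :
    ∑ t ∈ S, g.rootMultiplicity t ≤ g.natDegree := by
  classical
  calc ∑ t ∈ S, g.rootMultiplicity t = ∑ t ∈ S, g.roots.count t := by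
        simp only [Polynomial.count_roots]
    _ ≤ ∑ t ∈ S ∪ g.roots.toFinset, g.roots.count t :=
        Finset.sum_le_sum_of_subset Finset.subset_union_left
    _ = g.roots.card := Multiset.sum_count_eq_card fun t ht =>
        Finset.mem_union_right _ (Multiset.mem_toFinset.2 ht)
    _ ≤ g.natDegree := Polynomial.card_roots' g

lemma exists_card_mul_le_and_coeff_taylor_ne_zero {S : Finset R} (hS : S.Nonempty)
    {g : Polynomial R} (hg : g ≠ 0) :
    ∃ t ∈ S, ∃ j, S.card * j ≤ g.natDegree ∧ (Polynomial.taylor t g).coeff j ≠ 0 := by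
  obtain ⟨t, htS, hmin⟩ := S.exists_min_image (g.rootMultiplicity ·) hS
  refine ⟨t, htS, g.rootMultiplicity t, ?_, ?_⟩
  · calc S.card * g.rootMultiplicity t ≤ ∑ s ∈ S, g.rootMultiplicity s :=
          S.card_nsmul_le_sum _ _ hmin
      _ ≤ g.natDegree := sum_rootMultiplicity_le_natDegree S g
  · rw [Polynomial.rootMultiplicity_eq_natTrailingDegree, ← Polynomial.taylor_apply,
      ← Polynomial.trailingCoeff, Polynomial.trailingCoeff_nonzero_iff_nonzero, ne_eq,
      Polynomial.taylor_eq_zero]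
    exact hg

end RootCount

section SchwartzZippel

variable {R A : Type*} [CommSemiring R] [CommSemiring A] [Algebra R A] {n : ℕ}

lemma finSuccEquiv_mvTaylor_cons (t : A) (y : Fin n → A) (P : MvPolynomial (Fin (n + 1)) R) :
    finSuccEquiv A n (mvTaylor (Fin.cons t y) P) =
      Polynomial.taylor (C t) ((finSuccEquiv R n P).map (mvTaylor (R := R) y : _ →+* _)) := by
  have h : ((finSuccEquiv A n : _ →ₐ[A] _).restrictScalars R).comp (mvTaylor (Fin.cons t y)) =
      ((Polynomial.taylorAlgHom (C t : MvPolynomial (Fin n) A)).restrictScalars R).comp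
        ((Polynomial.mapAlgHom (mvTaylor y)).comp (finSuccEquiv R n : _ →ₐ[R] _)) := by
    ext1 k
    refine Fin.cases ?_ (fun k => ?_) k
    · simp [finSuccEquiv_apply]
    · simp [finSuccEquiv_apply]
  exact DFunLike.congr_fun h P

lemma coeff_coeff_mvTaylor_cons_X (P : MvPolynomial (Fin (n + 1)) R) (i : Fin n →₀ ℕ) (j : ℕ) :
    (coeff (i.cons 0) (mvTaylor (Fin.cons Polynomial.X 0) P)).coeff j = coeff (i.cons j) P := by
  rw [← finSuccEquiv_coeff_coeff, finSuccEquiv_mvTaylor_cons, Polynomial.taylor_coeff_zero,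
    Polynomial.eval_eq_sum_range' (lt_of_le_of_lt Polynomial.natDegree_map_le (Nat.lt_succ_self _)),
    coeff_sum, Polynomial.finsetSum_coeff, ← finSuccEquiv_coeff_coeff]
  simp only [Polynomial.coeff_map, RingHom.coe_coe, mvTaylor_zero, ← C_pow, mul_comm _ (C _),
    coeff_C_mul, coeff_map, Polynomial.algebraMap_eq, Polynomial.coeff_mul_C,
    Polynomial.coeff_X_pow, ite_mul, one_mul, zero_mul]
  rw [Finset.sum_ite_eq, ite_eq_left_iff, Finset.mem_range]
  intro h
  rw [Polynomial.coeff_eq_zero_of_natDegree_lt (by omega), coeff_zero]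

lemma taylor_coeff_mvTaylor_cons_X (t : R) (y : Fin n → R) (P : MvPolynomial (Fin (n + 1)) R)
    (i : Fin n →₀ ℕ) (j : ℕ) :
    (Polynomial.taylor t
      (coeff (i.cons 0) (mvTaylor (Fin.cons Polynomial.X (Polynomial.C ∘ y)) P))).coeff j =
      coeff (i.cons j) (mvTaylor (Fin.cons t y) P) := by
  have h : (Polynomial.taylorAlgHom t ∘ Fin.cons Polynomial.X (Polynomial.C ∘ y) :
        Fin (n + 1) → Polynomial R) = fun k =>
      algebraMap R (Polynomial R) (Fin.cons (α := fun _ => R) t y k) +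
        Fin.cons (α := fun _ => Polynomial R) Polynomial.X 0 k := by
    ext1 k
    refine Fin.cases ?_ (fun k => ?_) k <;> simp [add_comm]
  rw [← coeff_coeff_mvTaylor_cons_X (mvTaylor (Fin.cons t y) P), mvTaylor_mvTaylor,
    taylor_coeff_mvTaylor, h]

lemma coeff_coeff_mvTaylor_cons_X_C (y : Fin n → R) (P : MvPolynomial (Fin (n + 1)) R)
    (i : Fin n →₀ ℕ) (j : ℕ) :
    (coeff (i.cons 0) (mvTaylor (Fin.cons Polynomial.X (Polynomial.C ∘ y)) P)).coeff j =
      coeff i (mvTaylor y ((finSuccEquiv R n P).coeff j)) := by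
  rw [← Polynomial.taylor_zero (coeff _ _), taylor_coeff_mvTaylor_cons_X,
    ← finSuccEquiv_coeff_coeff, finSuccEquiv_mvTaylor_cons, C_0, Polynomial.taylor_zero,
    Polynomial.coeff_map, RingHom.coe_coe]

/-- The Schwartz–Zippel lemma with multiplicities, on the grid `S ^ n`. -/
lemma exists_card_mul_degree_le_and_coeff_mvTaylor_ne_zero {R : Type*} [CommRing R]
    [IsDomain R] {S : Finset R} (hS : S.Nonempty) {n : ℕ} {P : MvPolynomial (Fin n) R}
    (hP : P ≠ 0) :
    ∃ a : Fin n → R, (∀ k, a k ∈ S) ∧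
      ∃ i, S.card * i.degree ≤ P.totalDegree ∧ coeff i (mvTaylor a P) ≠ 0 := by
  induction n with
  | zero =>
    obtain ⟨i, hi⟩ := ne_zero_iff.1 hP
    refine ⟨0, finZeroElim, i, ?_, by rwa [mvTaylor_zero_self]⟩
    rw [Subsingleton.elim i 0, map_zero, mul_zero]
    exact Nat.zero_le _
  | succ n ih =>
    set f := finSuccEquiv R n P with hf
    have hlead : f.leadingCoeff ≠ 0 := by
      rw [Polynomial.leadingCoeff_ne_zero, hf]
      exact (map_ne_zero_iff _ (finSuccEquiv R n).injective).2 hP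
    obtain ⟨y, hyS, i, hi, hne⟩ := ih hlead
    set g := coeff (i.cons 0) (mvTaylor (Fin.cons Polynomial.X (Polynomial.C ∘ y)) P)
    have hcoeff (j : ℕ) : g.coeff j = coeff i (mvTaylor y (f.coeff j)) :=
      coeff_coeff_mvTaylor_cons_X_C y P i j
    have hg0 : g ≠ 0 := fun h => hne <| by
      rw [Polynomial.leadingCoeff, ← hcoeff, h, Polynomial.coeff_zero]
    have hdeg : g.natDegree ≤ f.natDegree := by
      rw [Polynomial.natDegree_le_iff_coeff_eq_zero]
      intro j hj
      rw [hcoeff, Polynomial.coeff_eq_zero_of_natDegree_lt hj, map_zero, coeff_zero]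
    obtain ⟨t, htS, j, hj, htj⟩ := exists_card_mul_le_and_coeff_taylor_ne_zero hS hg0
    refine ⟨Fin.cons t y, Fin.cases htS hyS, i.cons j, ?_, ?_⟩
    · have hcons : (i.cons j).degree = j + i.degree := by
        simp only [Finsupp.degree_eq_sum, Fin.sum_univ_succ, Finsupp.cons_zero, Finsupp.cons_succ]
      calc S.card * (i.cons j).degree = S.card * i.degree + S.card * j := by
            rw [hcons, mul_add, add_comm]
        _ ≤ f.leadingCoeff.totalDegree + f.natDegree := add_le_add hi (hj.trans hdeg)
        _ ≤ P.totalDegree := totalDegree_coeff_finSuccEquiv_add_le P f.natDegree hlead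
    · rwa [← taylor_coeff_mvTaylor_cons_X]

end SchwartzZippel

section Interpolation

variable {σ : Type*} [Finite σ]

variable (σ) in
/-- The exponent vectors of degree less than `m`, which index the coefficients that have to vanish
for a polynomial to vanish to order `m` at a point. -/
noncomputable def exponentsBelow (m : ℕ) : Finset (σ →₀ ℕ) :=
  (Finsupp.finite_of_degree_lt m).toFinset

lemma mem_exponentsBelow {m : ℕ} {i : σ →₀ ℕ} : i ∈ exponentsBelow σ m ↔ i.degree < m := by
  simp [exponentsBelow]

lemma finrank_restrictTotalDegree (K : Type*) [Field K] (d : ℕ) :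
    Module.finrank K (restrictTotalDegree σ K d) = (exponentsBelow σ (d + 1)).card := by
  rw [restrictTotalDegree, Module.finrank_eq_nat_card_basis (basisRestrictSupport K _),
    ← Set.ncard_coe_finset, ← Nat.card_coe_set_eq]
  congr 2
  ext i
  rw [Finset.mem_coe, mem_exponentsBelow, Nat.lt_succ_iff]
  rfl

lemma exists_vanishesToOrder {K ι : Type*} [Field K] [Fintype ι] (x : ι → σ → K) (m : ι → ℕ)
    (d : ℕ) (h : ∑ k, (exponentsBelow σ (m k)).card < (exponentsBelow σ (d + 1)).card) :
    ∃ P : MvPolynomial σ K, P ≠ 0 ∧ P.totalDegree ≤ d ∧ ∀ k, VanishesToOrder P (x k) (m k) := by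
  let E : restrictTotalDegree σ K d →ₗ[K] ((Σ k, exponentsBelow σ (m k)) → K) :=
    LinearMap.pi fun p =>
      (lcoeff K p.2.1).comp ((mvTaylor (x p.1)).toLinearMap.comp (Submodule.subtype _))
  have hker : LinearMap.ker E ≠ ⊥ := by
    apply LinearMap.ker_ne_bot_of_finrank_lt
    simpa [finrank_restrictTotalDegree] using h
  obtain ⟨P, hP, hP0⟩ := Submodule.exists_mem_ne_zero_of_ne_bot hker
  refine ⟨P, fun h0 => hP0 (Subtype.ext h0), (mem_restrictTotalDegree σ d _).1 P.2, fun k => ?_⟩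
  refine vanishesToOrder_iff.2 fun i hi => ?_
  exact congr_fun (LinearMap.mem_ker.1 hP) ⟨k, i, mem_exponentsBelow.2 hi⟩

end Interpolation

section ExponentCount

variable {σ : Type*} [Fintype σ]

lemma card_exponentsBelow_succ (m : ℕ) :
    (exponentsBelow σ (m + 1)).card = (m + Fintype.card σ).choose (Fintype.card σ) := by
  classical
  have h : exponentsBelow σ (m + 1) =
      (Finset.range (m + 1)).biUnion fun e => Finset.finsuppAntidiag Finset.univ e := by
    ext i
    simp [mem_exponentsBelow, Finset.mem_finsuppAntidiag, Finsupp.degree_eq_sum]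
  rw [h, Finset.card_biUnion]
  · simp only [Finset.card_finsuppAntidiag_nat_eq_multichoose, Finset.card_univ]
    exact Nat.sum_range_multichoose m _
  · intro d _ e _ hde
    refine Finset.disjoint_left.2 fun i hd he => hde ?_
    rw [Finset.mem_finsuppAntidiag] at hd he
    exact hd.1.symm.trans he.1

lemma card_exponentsBelow_le (m : ℕ) :
    ((exponentsBelow σ m).card : ℝ) ≤
      (m + Fintype.card σ : ℝ) ^ Fintype.card σ / (Fintype.card σ).factorial := by
  rcases m with _ | m
  · have h : exponentsBelow σ 0 = ∅ := by
      ext i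
      simp [mem_exponentsBelow]
    rw [h, Finset.card_empty, Nat.cast_zero]
    positivity
  · rw [card_exponentsBelow_succ]
    refine (Nat.choose_le_pow_div _ _).trans ?_
    push_cast
    gcongr
    exact le_add_of_nonneg_right zero_le_one

lemma le_card_exponentsBelow_succ (m : ℕ) :
    (m + 1 : ℝ) ^ Fintype.card σ / (Fintype.card σ).factorial ≤
      (exponentsBelow σ (m + 1)).card := by
  rw [card_exponentsBelow_succ]
  refine le_trans (le_of_eq ?_) (Nat.pow_le_choose _ _)
  rw [show m + Fintype.card σ + 1 - Fintype.card σ = m + 1 by omega, Nat.cast_add_one]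

lemma sum_card_exponentsBelow_ceil_lt {ι : Type*} [Fintype ι] {f : ι → ℝ} (hf : ∀ x, 0 ≤ f x)
    {D N : ℝ} (hD : 0 ≤ D) (hN : 0 < N)
    (h : ∑ x, (f x + (Fintype.card σ + 1) / N) ^ Fintype.card σ < D ^ Fintype.card σ) :
    ∑ x, (exponentsBelow σ ⌈N * f x⌉₊).card < (exponentsBelow σ (⌊N * D⌋₊ + 1)).card := by
  set n := Fintype.card σ
  rw [← Nat.cast_lt (α := ℝ), Nat.cast_sum]
  calc ∑ x, ((exponentsBelow σ ⌈N * f x⌉₊).card : ℝ)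
      ≤ ∑ x, (⌈N * f x⌉₊ + n : ℝ) ^ n / n.factorial :=
        Finset.sum_le_sum fun x _ => card_exponentsBelow_le _
    _ ≤ ∑ x, (N * (f x + (n + 1) / N)) ^ n / n.factorial := by
        gcongr with x
        rw [mul_add, mul_div_cancel₀ _ hN.ne']
        linarith [Nat.ceil_lt_add_one (mul_nonneg hN.le (hf x))]
    _ = N ^ n * (∑ x, (f x + (n + 1) / N) ^ n) / n.factorial := by
        simp only [mul_pow, Finset.mul_sum, Finset.sum_div]
    _ < N ^ n * D ^ n / n.factorial := by gcongr
    _ ≤ (⌊N * D⌋₊ + 1 : ℝ) ^ n / n.factorial := by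
        rw [← mul_pow]
        gcongr
        exact (Nat.lt_floor_add_one _).le
    _ ≤ (exponentsBelow σ (⌊N * D⌋₊ + 1)).card := le_card_exponentsBelow_succ _

end ExponentCount

section Kakeya

variable {F : Type*} [Field F] [Fintype F]

lemma sum_add_degree_le_of_vanishesToOrder {σ : Type*} {P : MvPolynomial σ F}
    {m : (σ → F) → ℕ} (hP : ∀ x, VanishesToOrder P x (m x)) {b : σ → F} {i : σ →₀ ℕ}
    (hdeg : i.degree ≤ P.totalDegree)
    (hi : coeff i (mvTaylor b (homogeneousComponent P.totalDegree P)) ≠ 0) (a : σ → F) :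
    ∑ t : F, m (a + t • b) + i.degree ≤ P.totalDegree + Fintype.card F * i.degree := by
  set g := coeff i (mvTaylor (linePoint a b) P) with hg
  have hg0 : g ≠ 0 := by
    intro h0
    apply hi
    rw [← homogeneousComponent_totalDegree_mvTaylor a P]
    nth_rw 1 [← Nat.sub_add_cancel hdeg]
    rw [← coeff_coeff_mvTaylor_linePoint, ← hg, h0, Polynomial.coeff_zero]
  have hsum : ∑ t : F, (m (a + t • b) - i.degree) ≤ P.totalDegree - i.degree :=
    calc ∑ t : F, (m (a + t • b) - i.degree) ≤ ∑ t : F, g.rootMultiplicity t :=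
          Finset.sum_le_sum fun t _ => (hP _).sub_degree_le_rootMultiplicity hg0
      _ ≤ g.natDegree := sum_rootMultiplicity_le_natDegree _ g
      _ ≤ P.totalDegree - i.degree := natDegree_coeff_mvTaylor_linePoint_le a b P i
  calc ∑ t : F, m (a + t • b) + i.degree
      ≤ ∑ t : F, (m (a + t • b) - i.degree + i.degree) + i.degree := by
        gcongr
        omega
    _ = ∑ t : F, (m (a + t • b) - i.degree) + Fintype.card F * i.degree + i.degree := by
        rw [Finset.sum_add_distrib, Finset.sum_const, Finset.card_univ, smul_eq_mul]
    _ ≤ P.totalDegree + Fintype.card F * i.degree := by omega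

lemma homogeneousComponent_totalDegree_ne_zero {σ R : Type*} [CommSemiring R]
    {P : MvPolynomial σ R} (hP : P ≠ 0) : homogeneousComponent P.totalDegree P ≠ 0 := by
  obtain ⟨u, hu, hdeg⟩ := Finset.exists_mem_eq_sup P.support (support_nonempty.2 hP)
    fun s => s.sum fun _ e => e
  refine ne_zero_iff.2 ⟨u, ?_⟩
  have hu' : u.degree = P.totalDegree := hdeg.symm
  rw [coeff_homogeneousComponent, if_pos hu']
  exact mem_support_iff.1 hu

variable {n : ℕ}

lemma exists_forall_card_mul_sum_line_le (m : (Fin n → F) → ℕ) (d : ℕ)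
    (h : ∑ x, (exponentsBelow (Fin n) (m x)).card < (exponentsBelow (Fin n) (d + 1)).card) :
    ∃ b : Fin n → F, ∀ a,
      Fintype.card F * ∑ t : F, m (a + t • b) ≤ (2 * Fintype.card F - 1) * d := by
  classical
  obtain ⟨P, hP, hPd, hvan⟩ := exists_vanishesToOrder id m d h
  obtain ⟨b, -, i, hi, hne⟩ := exists_card_mul_degree_le_and_coeff_mvTaylor_ne_zero
    (Finset.univ_nonempty (α := F)) (homogeneousComponent_totalDegree_ne_zero hP)
  rw [Finset.card_univ] at hi
  replace hi := hi.trans (homogeneousComponent_isHomogeneous P.totalDegree P).totalDegree_le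
  refine ⟨b, fun a => ?_⟩
  obtain ⟨r, hr⟩ : ∃ r, Fintype.card F = r + 1 := Nat.exists_eq_succ_of_ne_zero Fintype.card_ne_zero
  have hdeg : i.degree ≤ P.totalDegree := le_trans (Nat.le_mul_of_pos_left _ Fintype.card_pos) hi
  have hline := sum_add_degree_le_of_vanishesToOrder hvan hdeg hne a
  rw [hr] at hi hline ⊢
  calc (r + 1) * ∑ t : F, m (a + t • b) ≤ (r + 1) * (P.totalDegree + r * i.degree) := by
        gcongr
        linarith
    _ = (r + 1) * P.totalDegree + r * ((r + 1) * i.degree) := by ring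
    _ ≤ (r + 1) * P.totalDegree + r * P.totalDegree := by gcongr
    _ = (2 * r + 1) * P.totalDegree := by ring
    _ ≤ (2 * (r + 1) - 1) * d := by gcongr; omega

lemma exists_forall_sum_line_le_of_sum_pow_lt {f : (Fin n → F) → ℝ} (hf : ∀ x, 0 ≤ f x) {D : ℝ}
    (hD : 0 ≤ D) (h : ∑ x, f x ^ n < D ^ n) :
    ∃ b : Fin n → F, ∀ a, ∑ t : F, f (a + t • b) ≤ (2 - (Fintype.card F : ℝ)⁻¹) * D := by
  obtain ⟨N, hN, hsum⟩ : ∃ N : ℕ, 0 < N ∧ ∑ x, (f x + ((n : ℝ) + 1) / N) ^ n < D ^ n := by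
    have hlim : Filter.Tendsto (fun N : ℕ => ∑ x, (f x + ((n : ℝ) + 1) / N) ^ n) Filter.atTop
        (nhds (∑ x, (f x + 0) ^ n)) :=
      tendsto_finsetSum _ fun x _ =>
        (tendsto_const_nhds.add (tendsto_const_div_atTop_nhds_zero_nat _)).pow n
    simp only [add_zero] at hlim
    exact ((Filter.eventually_gt_atTop 0).and (hlim.eventually_lt_const h)).exists
  have hN' : (0 : ℝ) < N := Nat.cast_pos.2 hN
  have hcard := sum_card_exponentsBelow_ceil_lt (σ := Fin n) hf hD hN'
    (by rwa [Fintype.card_fin])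
  obtain ⟨b, hb⟩ := exists_forall_card_mul_sum_line_le _ _ hcard
  refine ⟨b, fun a => ?_⟩
  have hq : (0 : ℝ) < Fintype.card F := Nat.cast_pos.2 Fintype.card_pos
  have hcast : ((2 * Fintype.card F - 1 : ℕ) : ℝ) =
      Fintype.card F * (2 - (Fintype.card F : ℝ)⁻¹) := by
    rw [Nat.cast_pred (by have := Fintype.card_pos (α := F); omega), mul_sub,
      mul_inv_cancel₀ hq.ne', Nat.cast_mul, Nat.cast_two, mul_comm]
  have hc : 0 ≤ (Fintype.card F : ℝ) * (2 - (Fintype.card F : ℝ)⁻¹) :=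
    hcast ▸ Nat.cast_nonneg _
  refine le_of_mul_le_mul_left ?_ (mul_pos hq hN')
  calc Fintype.card F * N * ∑ t : F, f (a + t • b)
      = Fintype.card F * ∑ t : F, N * f (a + t • b) := by rw [mul_assoc, Finset.mul_sum]
    _ ≤ Fintype.card F * ∑ t : F, (⌈N * f (a + t • b)⌉₊ : ℝ) := by
        gcongr
        exact Nat.le_ceil _
    _ ≤ Fintype.card F * (2 - (Fintype.card F : ℝ)⁻¹) * ⌊N * D⌋₊ := by
        rw [← hcast]
        exact_mod_cast hb a
    _ ≤ Fintype.card F * (2 - (Fintype.card F : ℝ)⁻¹) * (N * D) := by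
        gcongr
        exact Nat.floor_le (mul_nonneg hN'.le hD)
    _ = Fintype.card F * N * ((2 - (Fintype.card F : ℝ)⁻¹) * D) := by ring

lemma exists_forall_sum_line_le (hn : n ≠ 0) {f : (Fin n → F) → ℝ} (hf : ∀ x, 0 ≤ f x) :
    ∃ b : Fin n → F, ∀ a, ∑ t : F, f (a + t • b) ≤
      (2 - (Fintype.card F : ℝ)⁻¹) * (∑ x, f x ^ n) ^ (n : ℝ)⁻¹ := by
  by_contra! h
  choose A hA using h
  set L := (∑ x, f x ^ n) ^ (n : ℝ)⁻¹
  have hsum : 0 ≤ ∑ x, f x ^ n := Finset.sum_nonneg fun x _ => pow_nonneg (hf x) n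
  have hL0 : 0 ≤ L := Real.rpow_nonneg hsum _
  have hLn : L ^ n = ∑ x, f x ^ n := Real.rpow_inv_natCast_pow hsum hn
  have hev : ∀ᶠ D in nhdsWithin L (Set.Ioi L), ∀ b,
      (2 - (Fintype.card F : ℝ)⁻¹) * D < ∑ t : F, f (A b + t • b) :=
    Filter.eventually_all.2 fun b =>
      ((Filter.tendsto_id.mono_left nhdsWithin_le_nhds).const_mul _).eventually_lt_const (hA b)
  obtain ⟨D, hD, hLD⟩ := (hev.and self_mem_nhdsWithin).exists
  have hLD' : L < D := hLD
  obtain ⟨b, hb⟩ := exists_forall_sum_line_le_of_sum_pow_lt hf (hL0.trans hLD'.le)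
    (hLn ▸ pow_lt_pow_left₀ hLD' hL0 hn)
  exact (hD b).not_ge (hb (A b))

lemma exists_ne_zero_forall_sum_line_le {V : Type*} [AddCommGroup V] [Module F V] [Nontrivial V]
    {f : V → ℝ} {K : ℝ} (h : ∃ b : V, ∀ a, ∑ t : F, f (a + t • b) ≤ K) :
    ∃ b : V, b ≠ 0 ∧ ∀ a, ∑ t : F, f (a + t • b) ≤ K := by
  obtain ⟨b, hb⟩ := h
  rcases ne_or_eq b 0 with hb0 | rfl
  · exact ⟨b, hb0, hb⟩
  -- Every value of `f` is at most `K / |F|`, so any direction will do.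
  obtain ⟨c, hc⟩ := exists_ne (0 : V)
  refine ⟨c, hc, fun a => ?_⟩
  simp only [smul_zero, add_zero, Finset.sum_const, Finset.card_univ, nsmul_eq_mul] at hb
  have hq : (0 : ℝ) < Fintype.card F := Nat.cast_pos.2 Fintype.card_pos
  calc ∑ t : F, f (a + t • c) ≤ ∑ _t : F, K / Fintype.card F :=
        Finset.sum_le_sum fun t _ => (le_div_iff₀' hq).2 (hb _)
    _ = K := by rw [Finset.sum_const, Finset.card_univ, nsmul_eq_mul, mul_div_cancel₀ _ hq.ne']

end Kakeya

section LineProjection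

variable {F V W : Type*} [Field F] [AddCommGroup V] [Module F V] [AddCommGroup W] [Module F W]

lemma exists_surjective_ker_eq_span_singleton [FiniteDimensional F V] [FiniteDimensional F W]
    (hVW : Module.finrank F V = Module.finrank F W + 1) {b : V} (hb : b ≠ 0) :
    ∃ φ : V →ₗ[F] W, Function.Surjective φ ∧ LinearMap.ker φ = Submodule.span F {b} := by
  have hquot : Module.finrank F (V ⧸ Submodule.span F {b}) = Module.finrank F W := by
    have hadd := Submodule.finrank_quotient_add_finrank (Submodule.span F {b})
    rw [finrank_span_singleton hb] at hadd
    omega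
  let e := LinearEquiv.ofFinrankEq (V ⧸ Submodule.span F {b}) W hquot
  refine ⟨e.toLinearMap.comp (Submodule.mkQ _), ?_, ?_⟩
  · exact e.surjective.comp (Submodule.mkQ_surjective _)
  · rw [LinearEquiv.ker_comp, Submodule.ker_mkQ]

lemma pmf_map_apply_eq_sum_line [Fintype F] (p : PMF V) {φ : V →ₗ[F] W} {b : V} (hb : b ≠ 0)
    (hφ : LinearMap.ker φ = Submodule.span F {b}) (a : V) :
    p.map φ (φ a) = ∑ t : F, p (a + t • b) := by
  classical
  have hfibre (x : V) : φ a = φ x ↔ ∃ t : F, a + t • b = x := by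
    rw [eq_comm, ← sub_eq_zero, ← map_sub, ← LinearMap.mem_ker, hφ, Submodule.mem_span_singleton]
    simp only [eq_sub_iff_add_eq, add_comm]
  have hinj : Function.Injective fun t : F => a + t • b :=
    (add_right_injective a).comp (smul_left_injective F hb)
  rw [PMF.map_apply, ← hinj.tsum_eq, tsum_fintype]
  · exact Finset.sum_congr rfl fun t _ => if_pos ((hfibre _).2 ⟨t, rfl⟩)
  · intro x hx
    exact (hfibre x).1 (ite_ne_right_iff.1 hx).1

end LineProjection

section MinEntropy

variable {α : Type*} (p : PMF α)

lemma bddAbove_range_pmf_toReal : BddAbove (Set.range fun w => (p w).toReal) :=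
  ⟨1, Set.forall_mem_range.2 fun w => ENNReal.toReal_mono ENNReal.one_ne_top (p.coe_le_one w)⟩

lemma iSup_pmf_toReal_pos : 0 < ⨆ w, (p w).toReal := by
  obtain ⟨w, hw⟩ := p.support_nonempty
  exact (ENNReal.toReal_pos ((p.mem_support_iff w).1 hw) (p.apply_ne_top w)).trans_le
    (le_ciSup (bddAbove_range_pmf_toReal p) w)

lemma neg_logb_le_minEntropy {q : ℕ} (hq : 1 < q) {B : ℝ} (hB : ∀ w, (p w).toReal ≤ B) :
    -Real.logb q B ≤ minEntropy q p := by
  have : Nonempty α := p.support_nonempty.nonempty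
  exact neg_le_neg
    (Real.logb_le_logb_of_le (Nat.one_lt_cast.2 hq) (iSup_pmf_toReal_pos p) (ciSup_le hB))

lemma sum_pmf_toReal_pow_succ_le [Fintype α] (k : ℕ) :
    ∑ w, (p w).toReal ^ (k + 1) ≤ (⨆ w, (p w).toReal) ^ k := by
  have hsum : ∑ w, (p w).toReal = 1 := by
    rw [← ENNReal.toReal_sum fun w _ => p.apply_ne_top w, ← tsum_fintype (L := .unconditional α),
      p.tsum_coe, ENNReal.toReal_one]
  calc ∑ w, (p w).toReal ^ (k + 1) ≤ ∑ w, (⨆ w, (p w).toReal) ^ k * (p w).toReal := by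
        gcongr with w
        rw [pow_succ]
        gcongr
        exact le_ciSup (bddAbove_range_pmf_toReal p) w
    _ = (⨆ w, (p w).toReal) ^ k := by rw [← Finset.mul_sum, hsum, mul_one]

lemma rpow_inv_sum_pmf_toReal_pow_le [Fintype α] {n : ℕ} (hn : 1 ≤ n) :
    (∑ w, (p w).toReal ^ n) ^ (n : ℝ)⁻¹ ≤ (⨆ w, (p w).toReal) ^ (((n : ℝ) - 1) / n) := by
  obtain ⟨k, rfl⟩ := Nat.exists_eq_add_of_le' hn
  refine (Real.rpow_le_rpow (by positivity) (sum_pmf_toReal_pow_succ_le p k)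
    (by positivity)).trans_eq ?_
  rw [← Real.rpow_natCast, ← Real.rpow_mul (iSup_pmf_toReal_pos p).le, Nat.cast_add_one,
    add_sub_cancel_right, div_eq_mul_inv]

end MinEntropy

/-- Entropic Kakeya bound (`k = 1`): for any random variable `R` supported on `F_q^n`,
there is a surjective linear map `φ : F_q^n → F_q^{n−1}` with
`H_∞^q(φ(R)) ≥ ((n−1)/n)·H_∞^q(R) − log_q(2 − q^{-1})`. -/
theorem entropic_kakeya {F : Type*} [Field F] [Fintype F] (q n : ℕ)
    (hq : Fintype.card F = q) (hn : 1 ≤ n) (R : PMF (Fin n → F)) :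
    ∃ φ : (Fin n → F) →ₗ[F] (Fin (n - 1) → F), Function.Surjective φ ∧
      ((n : ℝ) - 1) / n * minEntropy q R - Real.logb q (2 - (q : ℝ)⁻¹) ≤
        minEntropy q (R.map φ) := by
  subst hq
  have hcard : 1 < Fintype.card F := Fintype.one_lt_card
  have hc : 0 < 2 - (Fintype.card F : ℝ)⁻¹ := by
    linarith [inv_lt_one_of_one_lt₀ (Nat.one_lt_cast (α := ℝ).2 hcard)]
  have : NeZero n := ⟨by omega⟩
  obtain ⟨b, hb, hline⟩ := exists_ne_zero_forall_sum_line_le (f := fun x => (R x).toReal)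
    (exists_forall_sum_line_le (NeZero.ne n) fun _ => ENNReal.toReal_nonneg)
  have hfinrank : Module.finrank F (Fin n → F) = Module.finrank F (Fin (n - 1) → F) + 1 := by
    rw [Module.finrank_fin_fun, Module.finrank_fin_fun, Nat.sub_add_cancel hn]
  obtain ⟨φ, hsurj, hker⟩ := exists_surjective_ker_eq_span_singleton hfinrank hb
  refine ⟨φ, hsurj, ?_⟩
  set M := ⨆ w, (R w).toReal
  have hmass (w) :
      (R.map φ w).toReal ≤ (2 - (Fintype.card F : ℝ)⁻¹) * M ^ (((n : ℝ) - 1) / n) := by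
    obtain ⟨a, rfl⟩ := hsurj w
    rw [pmf_map_apply_eq_sum_line R hb hker, ENNReal.toReal_sum fun t _ => R.apply_ne_top _]
    exact (hline a).trans (mul_le_mul_of_nonneg_left (rpow_inv_sum_pmf_toReal_pow_le R hn) hc.le)
  have hM0 : 0 < M := iSup_pmf_toReal_pos R
  refine le_of_eq_of_le ?_ (neg_logb_le_minEntropy (R.map φ) hcard hmass)
  rw [Real.logb_mul hc.ne' (by positivity), Real.logb_rpow_eq_mul_logb_of_pos hM0, minEntropy]
  ring
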